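/- Let (Ω,T) be a subshift over a finite alphabet A with uniform word frequencies (uniquely ergodic). Suppose there exist a one-sided infinite word p : {1,2,…} → A, r ∈ ℕ and finite words v^(1),…,v^(r) such that, defining ω^(j) ∈ A^ℤ by ω^(j)(n) := p(n+1) for n ≥ 0, ω^(j)(−|v^(j)|)⋯ω^(j)(−1) := v^(j), and ω^(j)(−|v^(j)|−n) := p(n) for n ≥ 1, the following hold: (α') each ω^(j) belongs to Ω and condition (α) holds with leading words ω^(1),…,ω^(r); (β') p satisfies condition (PQ), and for every subadditive F : W(Ω) → ℝ there is a sequence (p^(n)) of prefixes of p with |p^(n)| → ∞ and F(p^(n))/|p^(n)| → F̄; (γ') for every j ∈ {1,…,r} there is a sequence (w_k) of finite words with |w_k| → ∞ such that for each k the word w_k w_k w_k occurs in ω^(j) at position −|w_k| or at position −2|w_k|. Then (Ω,T) satisfies conditions (β) and (γ), and hence the leading sequence condition (LSC). -/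

import Mathlib

open Filter Topology MeasureTheory

noncomputable section

abbrev SL2 := Matrix.SpecialLinearGroup (Fin 2) ℝ

/-- Operator norm of a 2×2 real matrix acting on Euclidean ℝ². -/
def matNorm (M : Matrix (Fin 2) (Fin 2) ℝ) : ℝ :=
  ‖LinearMap.toContinuousLinearMap (Matrix.toEuclideanLin M)‖

/-- Norm of an element of SL(2,ℝ). -/
def slNorm (M : SL2) : ℝ := matNorm (M : Matrix (Fin 2) (Fin 2) ℝ)

/-- Action of an SL(2,ℝ) matrix on a euclidean vector. -/
def slAct (M : SL2) (v : EuclideanSpace ℝ (Fin 2)) : EuclideanSpace ℝ (Fin 2) :=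
  Matrix.toEuclideanLin (M : Matrix (Fin 2) (Fin 2) ℝ) v

variable {𝒜 : Type*}

/-- The shift by `k` on two-sided sequences; `shift 1` is the left shift `T`. -/
def shift (k : ℤ) (ω : ℤ → 𝒜) : ℤ → 𝒜 := fun n => ω (n + k)

/-- `Ω ⊆ 𝒜^ℤ` is a subshift: nonempty, closed, invariant under the shift and its inverse. -/
structure IsSubshift [TopologicalSpace 𝒜] (Ω : Set (ℤ → 𝒜)) : Prop where
  nonempty : Ω.Nonempty
  closed : IsClosed Ω
  shift_mem : ∀ ω ∈ Ω, shift 1 ω ∈ Ω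
  shift_neg_mem : ∀ ω ∈ Ω, shift (-1) ω ∈ Ω

/-- The word `ω(k) ω(k+1) ⋯ ω(k+n-1)`. -/
def word (ω : ℤ → 𝒜) (k : ℤ) (n : ℕ) : List 𝒜 := (List.range n).map fun i => ω (k + i)

/-- `v` occurs in `ω` at position `k`. -/
def occursAt (v : List 𝒜) (ω : ℤ → 𝒜) (k : ℤ) : Prop := v = word ω k v.length

/-- The words of length `n` occurring in elements of `Ω`. -/
def WordsN (Ω : Set (ℤ → 𝒜)) (n : ℕ) : Set (List 𝒜) :=
  {v | ∃ ω ∈ Ω, ∃ k : ℤ, v = word ω k n}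

/-- The (nonempty) finite words occurring in elements of `Ω`. -/
def Words (Ω : Set (ℤ → 𝒜)) : Set (List 𝒜) :=
  {v | 1 ≤ v.length ∧ v ∈ WordsN Ω v.length}

/-- `A` is locally constant on `Ω`: its value depends only on a finite window around 0. -/
def LocConstOn (Ω : Set (ℤ → 𝒜)) {β : Type*} (A : (ℤ → 𝒜) → β) : Prop :=
  ∃ N : ℕ, ∀ ω ∈ Ω, ∀ ρ ∈ Ω, (∀ i : ℤ, |i| ≤ (N : ℤ) → ω i = ρ i) → A ω = A ρ

/-- The positive part of the cocycle: `cocycleP A n ω = A(T^{n-1}ω) ⋯ A(ω)`. -/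
def cocycleP (A : (ℤ → 𝒜) → SL2) : ℕ → (ℤ → 𝒜) → SL2
  | 0, _ => 1
  | n + 1, ω => A (shift n ω) * cocycleP A n ω

/-- The full cocycle over the shift, `n ∈ ℤ`. -/
def cocycle (A : (ℤ → 𝒜) → SL2) (n : ℤ) (ω : ℤ → 𝒜) : SL2 :=
  if 0 ≤ n then cocycleP A n.toNat ω else (cocycleP A (-n).toNat (shift n ω))⁻¹

/-- `A` is uniform on `Ω`: `(1/n) log‖A(n,ω)‖` converges uniformly on `Ω`. -/
def IsUniform (Ω : Set (ℤ → 𝒜)) (A : (ℤ → 𝒜) → SL2) : Prop :=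
  ∃ Λ : ℝ, TendstoUniformlyOn
    (fun (n : ℕ) (ω : ℤ → 𝒜) => Real.log (slNorm (cocycle A n ω)) / n)
    (fun _ => Λ) atTop Ω

/-- The number of occurrences of `v` in `ω(1)⋯ω(n)`. -/
def occCount (v : List 𝒜) (ω : ℤ → 𝒜) (n : ℕ) : ℕ :=
  Set.ncard {k : ℤ | 1 ≤ k ∧ k + v.length ≤ (n : ℤ) + 1 ∧ occursAt v ω k}

/-- Uniform existence of word frequencies (unique ergodicity). -/
def UniformWordFreq (Ω : Set (ℤ → 𝒜)) : Prop :=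
  ∀ v ∈ Words Ω, ∃ ν : ℝ, TendstoUniformlyOn
    (fun (n : ℕ) (ω : ℤ → 𝒜) => (occCount v ω n : ℝ) / n) (fun _ => ν) atTop Ω

/-- Minimality: every orbit is dense in `Ω`. -/
def IsMinimalSubshift [TopologicalSpace 𝒜] (Ω : Set (ℤ → 𝒜)) : Prop :=
  ∀ ω ∈ Ω, ∀ ρ ∈ Ω, ρ ∈ closure {σ : ℤ → 𝒜 | ∃ k : ℤ, σ = shift k ω}

/-- Condition (α): for all large `n`, the words of length `n` of `Ω` are exactly the
words `lead j (-k+1) ⋯ lead j (-k+n)`, `0 ≤ k ≤ n`, of the leading words. -/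
def CondAlpha (Ω : Set (ℤ → 𝒜)) {r : ℕ} (lead : Fin r → (ℤ → 𝒜)) : Prop :=
  (∀ j, lead j ∈ Ω) ∧ ∃ N : ℕ, ∀ n : ℕ, N ≤ n →
    WordsN Ω n = {v | ∃ j : Fin r, ∃ k : ℕ, k ≤ n ∧ v = word (lead j) (1 - (k : ℤ)) n}

/-- Condition (β): for every locally constant cocycle the Lyapunov limits along the
leading words exist in both time directions and all have the same value. -/
def CondBeta (Ω : Set (ℤ → 𝒜)) {r : ℕ} (lead : Fin r → (ℤ → 𝒜)) : Prop :=
  ∀ A : (ℤ → 𝒜) → SL2, LocConstOn Ω A → ∃ Λ : ℝ, ∀ j : Fin r,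
    Tendsto (fun n : ℕ => Real.log (slNorm (cocycle A n (lead j))) / n) atTop (𝓝 Λ) ∧
    Tendsto (fun n : ℕ => Real.log (slNorm (cocycle A (-(n : ℤ)) (lead j))) / n) atTop (𝓝 Λ)

/-- Condition (γ): along the leading words, for every locally constant cocycle and every
nonzero vector, at most one of the two one-sided exponents is negative. -/
def CondGamma (Ω : Set (ℤ → 𝒜)) {r : ℕ} (lead : Fin r → (ℤ → 𝒜)) : Prop :=
  ∀ A : (ℤ → 𝒜) → SL2, LocConstOn Ω A → ∀ j : Fin r,
    ∀ v : EuclideanSpace ℝ (Fin 2), v ≠ 0 →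
    ¬ (limsup (fun n : ℕ => Real.log ‖slAct (cocycle A n (lead j)) v‖ / n) atTop < 0 ∧
       limsup (fun n : ℕ => Real.log ‖slAct (cocycle A (-(n : ℤ)) (lead j)) v‖ / n) atTop < 0)

/-- The leading sequence condition (LSC). -/
def SatisfiesLSC (Ω : Set (ℤ → 𝒜)) : Prop :=
  ∃ (r : ℕ) (lead : Fin r → (ℤ → 𝒜)), CondAlpha Ω lead ∧ CondBeta Ω lead ∧ CondGamma Ω lead

/-- `F` is subadditive on the words of `Ω`. -/
def SubadditiveOn (Ω : Set (ℤ → 𝒜)) (F : List 𝒜 → ℝ) : Prop :=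
  ∀ x y : List 𝒜, x ∈ Words Ω → y ∈ Words Ω → (x ++ y) ∈ Words Ω → F (x ++ y) ≤ F x + F y

/-- `Fb` is the asymptotic mean `lim_n max { F x / n : x ∈ W(Ω)_n }` of `F`. -/
def IsAsympMean (Ω : Set (ℤ → 𝒜)) (F : List 𝒜 → ℝ) (Fb : ℝ) : Prop :=
  Tendsto (fun n : ℕ => sSup ((fun x => F x / n) '' WordsN Ω n)) atTop (𝓝 Fb)

/-- Maximal number of pairwise disjoint occurrences of `v` in `ω(1)⋯ω(n)`. -/
def disjCount (v : List 𝒜) (ω : ℤ → 𝒜) (n : ℕ) : ℕ :=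
  sSup {m : ℕ | ∃ S : Finset ℤ, S.card = m ∧
    (∀ k ∈ S, 1 ≤ k ∧ k + v.length ≤ (n : ℤ) + 1 ∧ occursAt v ω k) ∧
    (∀ k ∈ S, ∀ l ∈ S, k ≠ l → (v.length : ℤ) ≤ |k - l|)}

/-- Condition (PQ) for the one-sided word `p(1)p(2)⋯`. -/
def CondPQ (p : ℤ → 𝒜) : Prop :=
  ∃ c : ℝ, 0 < c ∧ ∀ m : ℕ, 1 ≤ m →
    c ≤ liminf (fun n : ℕ => (m : ℝ) / n * disjCount (word p 1 m) p n) atTop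

/-- ℓ²(ℤ) over the reals. -/
abbrev Ell2Z : Type := lp (fun _ : ℤ => ℝ) 2

/-- `H` acts as the Jacobi operator with coefficients `f, g` at `ω`. -/
def IsJacobiAt (f g : (ℤ → 𝒜) → ℝ) (ω : ℤ → 𝒜) (H : Ell2Z →L[ℝ] Ell2Z) : Prop :=
  ∀ u : Ell2Z, ∀ n : ℤ,
    (H u : ∀ _ : ℤ, ℝ) n =
      f (shift n ω) * (u : ∀ _ : ℤ, ℝ) (n - 1) + f (shift (n + 1) ω) * (u : ∀ _ : ℤ, ℝ) (n + 1)
        + g (shift n ω) * (u : ∀ _ : ℤ, ℝ) n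

/-- The pair `(f,g)` is periodic on `Ω`. -/
def PeriodicPair (Ω : Set (ℤ → 𝒜)) (f g : (ℤ → 𝒜) → ℝ) : Prop :=
  ∃ P : ℕ, 1 ≤ P ∧ ∀ ω ∈ Ω, f (shift (P : ℤ) ω) = f ω ∧ g (shift (P : ℤ) ω) = g ω

/-- `S ⊆ ℝ` is a Cantor set of Lebesgue measure zero: compact, empty interior,
no isolated points, Lebesgue measure zero. -/
def IsMeasureZeroCantor (S : Set ℝ) : Prop :=
  IsCompact S ∧ interior S = ∅ ∧ Perfect S ∧ volume S = 0

/-- `n` copies of `x` separated by `n-1` copies of the letter `l`. -/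
def sepJoin (x : List 𝒜) (l : 𝒜) (m : ℕ) : List 𝒜 :=
  (List.replicate (m - 1) (x ++ [l])).flatten ++ x

/-- `Blk a nseq (k+1)` is the block `block(k)` of the simple Toeplitz construction
(with `Blk a nseq 0 = block(-1) = ε`). -/
def Blk (a : ℕ → 𝒜) (nseq : ℕ → ℕ) : ℕ → List 𝒜
  | 0 => []
  | k + 1 => sepJoin (Blk a nseq k) (a k) (nseq k)

/-- `p(1)p(2)⋯` is the one-sided word `block(∞)`: every block is a prefix of it. -/
def IsBlockInf (a : ℕ → 𝒜) (nseq : ℕ → ℕ) (p : ℤ → 𝒜) : Prop :=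
  ∀ k : ℕ, word p 1 (Blk a nseq k).length = Blk a nseq k

/-- The simple Toeplitz subshift generated by `block(∞) = p(1)p(2)⋯`: all two-sided
sequences whose finite subwords all occur in `block(∞)`. -/
def toeplitzΩ (p : ℤ → 𝒜) : Set (ℤ → 𝒜) :=
  {ω | ∀ (i : ℤ) (n : ℕ), ∃ l : ℤ, 1 ≤ l ∧ word ω i n = word p l n}

/-- The eventual alphabet: letters occurring infinitely often in `(a_k)`. -/
def EvAlph (a : ℕ → 𝒜) : Set 𝒜 := {x | ∀ K : ℕ, ∃ k, K ≤ k ∧ a k = x}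

/-- The leading word `p^R v | p`: equals `p(n+1)` for `n ≥ 0`, carries the word `v` on
positions `-|v|, …, -1`, and equals `p(-(n+|v|))` for `n < -|v|`. -/
def leadWordGen (p : ℤ → 𝒜) (v : List 𝒜) : ℤ → 𝒜 := fun n =>
  if 0 ≤ n then p (n + 1)
  else if -(v.length : ℤ) ≤ n then v.getD (n + v.length).toNat (p 1)
  else p (-(n + v.length))

/-- The Gauss map. -/
def gaussMap (x : ℝ) : ℝ := 1 / x - ⌊1 / x⌋

/-- `cfSeq α n` is the continued fraction coefficient `a_{n+1}` of `α`. -/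
def cfSeq (α : ℝ) (n : ℕ) : ℕ := ⌊1 / (gaussMap^[n] α)⌋₊

/-- The standard Sturmian words: `sturmW α (n+1) = s_n`, `sturmW α 0 = s_{-1} = 1`,
`sturmW α 1 = s_0 = 0`, `s_1 = s_0^{a_1 - 1} s_{-1}`, `s_n = s_{n-1}^{a_n} s_{n-2}`. -/
def sturmW (α : ℝ) : ℕ → List (Fin 2)
  | 0 => [1]
  | 1 => [0]
  | 2 => List.replicate (cfSeq α 0 - 1) (0 : Fin 2) ++ [1]
  | n + 3 => (List.replicate (cfSeq α (n + 1)) (sturmW α (n + 2))).flatten ++ sturmW α (n + 1)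

/-- The Sturmian subshift with rotation number `α`: all two-sided sequences whose finite
subwords occur in some `s_n`. -/
def sturmΩ (α : ℝ) : Set (ℤ → Fin 2) :=
  {ω | ∀ (i : ℤ) (n : ℕ), ∃ m : ℕ, word ω i n <:+: sturmW α m}

/-- The positive cocycle of a map `A` over a transformation `T`:
`cocycleH T A n ω = A(T^{n-1}ω) ⋯ A(ω)`. -/
def cocycleH {Ω : Type*} (T : Ω → Ω) (A : Ω → SL2) : ℕ → Ω → SL2
  | 0, _ => 1
  | n + 1, ω => A (T^[n] ω) * cocycleH T A n ω

end

/-!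
The logarithm of the norm of the cocycle is, up to a bounded error, a subadditive function `F` of
the word read off along the orbit. If some long prefix of `p` had a mean below `F̄`, then by (PQ)
disjoint copies of it would fill a fixed proportion of every long prefix, which would keep *all*
means along long prefixes below `F̄`; as `F̄` is reached along some prefixes, `F` has mean `F̄`
along all of them. This gives the forward limit in (β). The cubes around the origin move every
window of a leading word into one of the two copies of `p`, so the set of words of `Ω` is closed
under reversal, and the same argument for `x ↦ F (x.reverse)` gives the backward limit. For (γ),
Gordon's argument: across a cube the cocycle is, up to bounded factors, a power of one matrix
`M`, and by Cayley–Hamilton `M v`, `M² v` and `M⁻¹ v` cannot all be small.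
-/

section SpecialLinear

open scoped Matrix

/-- The logarithm of the norm on `SL(2,ℝ)`: a length function on the group, subadditive and
invariant under inversion. -/
noncomputable def slLogNorm (M : SL2) : ℝ := Real.log (slNorm M)

open scoped Matrix.Norms.L2Operator in
lemma slNorm_eq_l2_opNorm (M : SL2) : slNorm M = ‖(M : Matrix (Fin 2) (Fin 2) ℝ)‖ := rfl

lemma slNorm_nonneg (M : SL2) : 0 ≤ slNorm M := norm_nonneg _

open scoped Matrix.Norms.L2Operator in
lemma slNorm_mul_le (M N : SL2) : slNorm (M * N) ≤ slNorm M * slNorm N := by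
  simpa only [slNorm_eq_l2_opNorm, Matrix.SpecialLinearGroup.coe_mul] using Matrix.l2_opNorm_mul _ _

open scoped Matrix.Norms.L2Operator in
lemma slNorm_one : slNorm 1 = 1 := by
  rw [slNorm_eq_l2_opNorm, Matrix.SpecialLinearGroup.coe_one, CStarRing.norm_one]

open scoped Matrix.Norms.L2Operator in
lemma slNorm_inv (M : SL2) : slNorm M⁻¹ = slNorm M := by
  -- In `SL(2,ℝ)` the inverse is the transpose conjugated by a quarter turn.
  set R : Matrix (Fin 2) (Fin 2) ℝ := !![0, 1; -1, 0] with hR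
  have hR_unitary : R ∈ unitary (Matrix (Fin 2) (Fin 2) ℝ) := by
    rw [Unitary.mem_iff]
    constructor <;> ext i j <;> fin_cases i <;> fin_cases j <;>
      simp [hR, Matrix.mul_apply, Matrix.star_apply, Fin.sum_univ_two]
  have hinv : ((M⁻¹ : SL2) : Matrix (Fin 2) (Fin 2) ℝ) = R * Mᴴ * star R := by
    rw [Matrix.SpecialLinearGroup.coe_inv, Matrix.adjugate_fin_two]
    ext i j
    fin_cases i <;> fin_cases j <;>
      simp [hR, Matrix.mul_apply, Fin.sum_univ_two, Matrix.star_apply, Matrix.vecMul, dotProduct]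
  rw [slNorm_eq_l2_opNorm, slNorm_eq_l2_opNorm, hinv,
    CStarRing.norm_mul_mem_unitary _ (Unitary.star_mem hR_unitary),
    CStarRing.norm_mem_unitary_mul _ hR_unitary, Matrix.l2_opNorm_conjTranspose]

lemma one_le_slNorm (M : SL2) : 1 ≤ slNorm M := by
  have h : 1 ≤ slNorm M * slNorm M := by
    calc 1 = slNorm (M * M⁻¹) := by rw [mul_inv_cancel, slNorm_one]
      _ ≤ slNorm M * slNorm M⁻¹ := slNorm_mul_le _ _
      _ = slNorm M * slNorm M := by rw [slNorm_inv]
  nlinarith [slNorm_nonneg M]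

lemma slNorm_pos (M : SL2) : 0 < slNorm M := one_pos.trans_le (one_le_slNorm M)

lemma slLogNorm_nonneg (M : SL2) : 0 ≤ slLogNorm M := Real.log_nonneg (one_le_slNorm M)

lemma slLogNorm_one : slLogNorm 1 = 0 := by rw [slLogNorm, slNorm_one, Real.log_one]

lemma slLogNorm_inv (M : SL2) : slLogNorm M⁻¹ = slLogNorm M := by
  rw [slLogNorm, slNorm_inv, slLogNorm]

lemma slLogNorm_mul_le (M N : SL2) : slLogNorm (M * N) ≤ slLogNorm M + slLogNorm N := by
  rw [slLogNorm, slLogNorm, slLogNorm, ← Real.log_mul (slNorm_pos M).ne' (slNorm_pos N).ne']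
  exact Real.log_le_log (slNorm_pos _) (slNorm_mul_le M N)

lemma abs_slLogNorm_mul_sub_right_le (M N : SL2) :
    |slLogNorm (M * N) - slLogNorm N| ≤ slLogNorm M := by
  have hle := slLogNorm_mul_le M N
  have hge := slLogNorm_mul_le M⁻¹ (M * N)
  rw [inv_mul_cancel_left, slLogNorm_inv] at hge
  exact abs_sub_le_iff.2 ⟨by linarith, by linarith⟩

lemma abs_slLogNorm_mul_sub_left_le (M N : SL2) :
    |slLogNorm (M * N) - slLogNorm M| ≤ slLogNorm N := by
  simpa only [← mul_inv_rev, slLogNorm_inv] using abs_slLogNorm_mul_sub_right_le N⁻¹ M⁻¹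

lemma slAct_mul (M N : SL2) (v : EuclideanSpace ℝ (Fin 2)) :
    slAct (M * N) v = slAct M (slAct N v) := by
  simp [slAct, Matrix.toLpLin_apply]

lemma slAct_one (v : EuclideanSpace ℝ (Fin 2)) : slAct 1 v = v := by
  simp [slAct]

lemma slAct_inv_slAct (M : SL2) (v : EuclideanSpace ℝ (Fin 2)) :
    slAct M⁻¹ (slAct M v) = v := by
  rw [← slAct_mul, inv_mul_cancel, slAct_one]

lemma slAct_ne_zero (M : SL2) {v : EuclideanSpace ℝ (Fin 2)} (hv : v ≠ 0) : slAct M v ≠ 0 := by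
  intro h
  exact hv (by rw [← slAct_inv_slAct M v, h]; simp only [slAct, map_zero])

lemma norm_slAct_le_exp_mul {M : SL2} {D : ℝ} (hM : slLogNorm M ≤ D)
    (v : EuclideanSpace ℝ (Fin 2)) : ‖slAct M v‖ ≤ Real.exp D * ‖v‖ := by
  calc ‖slAct M v‖ ≤ slNorm M * ‖v‖ :=
        (LinearMap.toContinuousLinearMap (Matrix.toEuclideanLin M.1)).le_opNorm v
    _ ≤ Real.exp D * ‖v‖ := by
        gcongr
        exact (Real.log_le_iff_le_exp (slNorm_pos M)).1 hM

lemma trace_smul_eq_slAct_add_slAct_inv (M : SL2) (v : EuclideanSpace ℝ (Fin 2)) :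
    (M : Matrix (Fin 2) (Fin 2) ℝ).trace • v = slAct M v + slAct M⁻¹ v := by
  ext i
  fin_cases i <;>
    simp [slAct, Matrix.toLpLin_apply, dotProduct, Fin.sum_univ_two,
      Matrix.SpecialLinearGroup.coe_inv, Matrix.adjugate_fin_two, Matrix.trace_fin_two] <;> ring

lemma norm_le_norm_slAct_add_sq_add_inv (M : SL2) (v : EuclideanSpace ℝ (Fin 2)) :
    ‖v‖ ≤ ‖slAct M v‖ + ‖slAct (M * M) v‖ + ‖slAct M⁻¹ v‖ := by
  set t := (M : Matrix (Fin 2) (Fin 2) ℝ).trace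
  have hforward : v = t • slAct M v - slAct (M * M) v := by
    rw [trace_smul_eq_slAct_add_slAct_inv, slAct_inv_slAct, slAct_mul, add_sub_cancel_left]
  have hM := norm_nonneg (slAct M v)
  have hMM := norm_nonneg (slAct (M * M) v)
  have hMinv := norm_nonneg (slAct M⁻¹ v)
  rcases le_total |t| 1 with ht | ht
  · have h : ‖v‖ ≤ |t| * ‖slAct M v‖ + ‖slAct (M * M) v‖ := by
      conv_lhs => rw [hforward]
      simpa only [norm_smul, Real.norm_eq_abs] using norm_sub_le (t • slAct M v) (slAct (M * M) v)
    nlinarith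
  · have h : |t| * ‖v‖ ≤ ‖slAct M v‖ + ‖slAct M⁻¹ v‖ := by
      rw [← Real.norm_eq_abs, ← norm_smul, trace_smul_eq_slAct_add_slAct_inv]
      exact norm_add_le _ _
    nlinarith [norm_nonneg v]

/- With `P`, `M`, `Q` the cocycle over three consecutive near-periods, `P * M` and `Q⁻¹` stand for
`M * M` and `M⁻¹`. -/
lemma norm_le_exp_mul_of_slLogNorm_le {M P Q : SL2} {D : ℝ} (hP : slLogNorm (P * M⁻¹) ≤ D)
    (hQ : slLogNorm (M⁻¹ * Q) ≤ D) (v : EuclideanSpace ℝ (Fin 2)) :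
    ‖v‖ ≤ Real.exp D * (‖slAct M v‖ + ‖slAct (P * M) v‖ + ‖slAct Q⁻¹ v‖) := by
  have hM : ‖slAct M v‖ ≤ Real.exp D * ‖slAct M v‖ :=
    le_mul_of_one_le_left (norm_nonneg _) (Real.one_le_exp ((slLogNorm_nonneg _).trans hP))
  have hMM : ‖slAct (M * M) v‖ ≤ Real.exp D * ‖slAct (P * M) v‖ := by
    have h := norm_slAct_le_exp_mul ((slLogNorm_inv _).trans_le hP) (slAct (P * M) v)
    rwa [← slAct_mul, show (P * M⁻¹)⁻¹ * (P * M) = M * M by group] at h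
  have hMinv : ‖slAct M⁻¹ v‖ ≤ Real.exp D * ‖slAct Q⁻¹ v‖ := by
    have h := norm_slAct_le_exp_mul hQ (slAct Q⁻¹ v)
    rwa [← slAct_mul, mul_inv_cancel_right] at h
  linarith [norm_le_norm_slAct_add_sq_add_inv M v]

lemma tendsto_zero_of_limsup_log_div_neg {f : ℕ → ℝ} (hf : ∀ n, 0 ≤ f n)
    (hbdd : IsBoundedUnder (· ≤ ·) atTop fun n : ℕ => Real.log (f n) / n)
    (hlimsup : limsup (fun n : ℕ => Real.log (f n) / n) atTop < 0) :
    Tendsto f atTop (𝓝 0) := by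
  obtain ⟨b, hb, hb0⟩ := exists_between hlimsup
  have hexp : Tendsto (fun n : ℕ => Real.exp (b * n)) atTop (𝓝 0) :=
    Real.tendsto_exp_atBot.comp (tendsto_natCast_atTop_atTop.const_mul_atTop_of_neg hb0)
  refine squeeze_zero' (Eventually.of_forall hf) ?_ hexp
  filter_upwards [eventually_lt_of_limsup_lt hb hbdd, eventually_gt_atTop 0] with n hn hn0
  rw [div_lt_iff₀ (Nat.cast_pos.2 hn0)] at hn
  rcases (hf n).eq_or_lt with h0 | hpos
  · exact h0 ▸ (Real.exp_pos _).le
  · exact (Real.log_le_iff_le_exp hpos).1 hn.le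

lemma tendsto_norm_slAct_zero_of_limsup_neg {M : ℕ → SL2} {C : ℝ}
    (hM : ∀ n, slLogNorm (M n) ≤ n * C) {v : EuclideanSpace ℝ (Fin 2)} (hv : v ≠ 0)
    (hlimsup : limsup (fun n : ℕ => Real.log ‖slAct (M n) v‖ / n) atTop < 0) :
    Tendsto (fun n => ‖slAct (M n) v‖) atTop (𝓝 0) := by
  refine tendsto_zero_of_limsup_log_div_neg (fun n => norm_nonneg _)
    (isBoundedUnder_of_eventually_le (a := C + |Real.log ‖v‖|) ?_) hlimsup
  filter_upwards [eventually_ge_atTop 1] with n hn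
  have hn1 : (1 : ℝ) ≤ n := by exact_mod_cast hn
  rw [div_le_iff₀ (by linarith)]
  calc Real.log ‖slAct (M n) v‖ ≤ Real.log (Real.exp (n * C) * ‖v‖) :=
        Real.log_le_log (norm_pos_iff.2 (slAct_ne_zero _ hv)) (norm_slAct_le_exp_mul (hM n) v)
    _ = n * C + Real.log ‖v‖ := by
        rw [Real.log_mul (Real.exp_ne_zero _) (norm_ne_zero_iff.2 hv), Real.log_exp]
    _ ≤ (C + |Real.log ‖v‖|) * n := by
        nlinarith [le_abs_self (Real.log ‖v‖), abs_nonneg (Real.log ‖v‖)]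

end SpecialLinear

section Words

variable {𝒜 : Type*} {Ω : Set (ℤ → 𝒜)}

/- In `word` the elaborator coerces `List.range n` to a `List ℤ`; here the index stays in `ℕ`. -/
lemma word_eq_map_range (ω : ℤ → 𝒜) (k : ℤ) (n : ℕ) :
    word ω k n = (List.range n).map fun i : ℕ => ω (k + i) := by
  simp only [word, List.bind_eq_flatMap, List.pure_def, List.map_flatMap, List.map_cons,
    List.map_nil]
  rw [← List.map_eq_flatMap]

@[simp]
lemma length_word (ω : ℤ → 𝒜) (k : ℤ) (n : ℕ) : (word ω k n).length = n := by
  simp [word_eq_map_range]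

lemma word_eq_word_iff {ω ρ : ℤ → 𝒜} {k l : ℤ} {n : ℕ} :
    word ω k n = word ρ l n ↔ ∀ i : ℕ, i < n → ω (k + i) = ρ (l + i) := by
  simp [word_eq_map_range]

lemma word_add (ω : ℤ → 𝒜) (k : ℤ) (m n : ℕ) :
    word ω k (m + n) = word ω k m ++ word ω (k + m) n := by
  simp [word_eq_map_range, List.range_add, Function.comp_def, add_assoc]

lemma word_shift (ω : ℤ → 𝒜) (a k : ℤ) (n : ℕ) : word (shift a ω) k n = word ω (k + a) n :=
  word_eq_word_iff.2 fun i _ => congrArg ω (by ring)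

lemma reverse_word (ω : ℤ → 𝒜) (k : ℤ) (n : ℕ) :
    (word ω k n).reverse = word (fun i => ω (-i)) (1 - k - n) n := by
  refine List.ext_getElem (by simp) fun i hi _ => ?_
  have hin : i < n := by simpa using hi
  simp only [word_eq_map_range, List.getElem_reverse, List.getElem_map, List.getElem_range,
    List.length_map, List.length_range]
  exact congrArg ω (by omega)

lemma word_eq_and_word_eq_of_append {ω : ℤ → 𝒜} {k : ℤ} {x y : List 𝒜}
    (h : x ++ y = word ω k (x ++ y).length) :
    x = word ω k x.length ∧ y = word ω (k + x.length) y.length := by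
  rw [List.length_append, word_add] at h
  exact List.append_inj h (by simp)

lemma apply_eq_apply_add_of_occursAt_cube {w : List 𝒜} {ω : ℤ → 𝒜} {s i : ℤ}
    (h : occursAt (w ++ w ++ w) ω s) (hsi : s ≤ i) (his : i < s + 2 * w.length) :
    ω i = ω (i + w.length) := by
  have hfirst : w ++ w = word ω s (w ++ w).length := (word_eq_and_word_eq_of_append h).1
  have hlast : w ++ w = word ω (s + w.length) (w ++ w).length := by
    rw [occursAt, List.append_assoc] at h
    exact (word_eq_and_word_eq_of_append h).2
  obtain ⟨q, rfl⟩ := Int.le.dest hsi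
  have hq := word_eq_word_iff.1 (hfirst.symm.trans hlast) q (by rw [List.length_append]; omega)
  rwa [add_right_comm] at hq

lemma word_mem_wordsN {ω : ℤ → 𝒜} (hω : ω ∈ Ω) (k : ℤ) (n : ℕ) : word ω k n ∈ WordsN Ω n :=
  ⟨ω, hω, k, rfl⟩

lemma length_of_mem_wordsN {n : ℕ} {x : List 𝒜} (hx : x ∈ WordsN Ω n) : x.length = n := by
  obtain ⟨ω, _, k, rfl⟩ := hx
  exact length_word _ _ _

lemma append_mem_wordsN {x y : List 𝒜} (h : x ++ y ∈ WordsN Ω (x ++ y).length) :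
    x ∈ WordsN Ω x.length ∧ y ∈ WordsN Ω y.length := by
  obtain ⟨ω, hω, k, hxy⟩ := h
  obtain ⟨hx, hy⟩ := word_eq_and_word_eq_of_append hxy
  exact ⟨⟨ω, hω, k, hx⟩, ⟨ω, hω, _, hy⟩⟩

lemma CondAlpha.exists_word_eq {r : ℕ} {lead : Fin r → ℤ → 𝒜} (hα : CondAlpha Ω lead) (n : ℕ) :
    ∃ K : ℕ, ∀ x ∈ WordsN Ω n, ∃ j, ∃ k ≤ K, x = word (lead j) (1 - (k : ℤ)) n := by
  obtain ⟨-, N, hN⟩ := hα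
  refine ⟨n + N, ?_⟩
  rintro _ ⟨ω, hω, a, rfl⟩
  obtain ⟨j, k, hk, hword⟩ := (hN (n + N) (by omega)).subset (word_mem_wordsN hω a (n + N))
  rw [word_add, word_add] at hword
  exact ⟨j, k, hk, (List.append_inj hword (by simp)).1⟩

lemma CondAlpha.finite_wordsN {r : ℕ} {lead : Fin r → ℤ → 𝒜} (hα : CondAlpha Ω lead) (n : ℕ) :
    (WordsN Ω n).Finite := by
  obtain ⟨K, hK⟩ := hα.exists_word_eq n
  refine ((Set.finite_univ.prod (Set.finite_Iic K)).image
    fun jk : Fin r × ℕ => word (lead jk.1) (1 - (jk.2 : ℤ)) n).subset fun x hx => ?_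
  obtain ⟨j, k, hk, rfl⟩ := hK x hx
  exact ⟨(j, k), ⟨trivial, hk⟩, rfl⟩

lemma LocConstOn.finite_image {β : Type*} {A : (ℤ → 𝒜) → β} (hA : LocConstOn Ω A)
    (hfin : ∀ n, (WordsN Ω n).Finite) : (A '' Ω).Finite := by
  obtain rfl | ⟨ω₀, -⟩ := Ω.eq_empty_or_nonempty
  · simp
  have : Nonempty β := ⟨A ω₀⟩
  obtain ⟨N, hN⟩ := hA
  let window : Ω → List 𝒜 := fun ω => word ω.1 (-N) (2 * N + 1)
  have hfactor : Function.FactorsThrough (fun ω : Ω => A ω) window := by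
    refine fun ω ρ h => hN _ ω.2 _ ρ.2 fun i hi => ?_
    rw [abs_le] at hi
    have hi' := word_eq_word_iff.1 h (i + N).toNat (by omega)
    rwa [show -(N : ℤ) + (i + N).toNat = i by omega] at hi'
  obtain ⟨e, he⟩ := (Function.factorsThrough_iff _).1 hfactor
  refine ((hfin (2 * N + 1)).image e).subset ?_
  rintro _ ⟨ω, hω, rfl⟩
  exact ⟨_, word_mem_wordsN hω _ _, (congrFun he ⟨ω, hω⟩).symm⟩

end Words

section Subadditive

variable {𝒜 : Type*} {Ω : Set (ℤ → 𝒜)} {F : List 𝒜 → ℝ} {p : ℤ → 𝒜}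

lemma SubadditiveOn.append_le (hF : SubadditiveOn Ω F) (hnil : 0 ≤ F []) {x y : List 𝒜}
    (hxy : x ++ y ∈ WordsN Ω (x ++ y).length) : F (x ++ y) ≤ F x + F y := by
  obtain rfl | hx := eq_or_ne x []
  · simpa using hnil
  obtain rfl | hy := eq_or_ne y []
  · simpa using hnil
  obtain ⟨hxΩ, hyΩ⟩ := append_mem_wordsN hxy
  rw [← List.length_pos_iff] at hx hy
  exact hF x y ⟨hx, hxΩ⟩ ⟨hy, hyΩ⟩ ⟨by rw [List.length_append]; omega, hxy⟩

lemma SubadditiveOn.word_add_le (hF : SubadditiveOn Ω F) (hnil : 0 ≤ F []) {ω : ℤ → 𝒜} {k : ℤ}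
    {m n : ℕ} (h : word ω k (m + n) ∈ WordsN Ω (m + n)) :
    F (word ω k (m + n)) ≤ F (word ω k m) + F (word ω (k + m) n) := by
  rw [word_add] at h ⊢
  exact hF.append_le hnil (by simpa using h)

open scoped Pointwise in
lemma SubadditiveOn.exists_isAsympMean (hF : SubadditiveOn Ω F) (hne : Ω.Nonempty)
    (hfin : ∀ n, (WordsN Ω n).Finite) {B : ℝ} (hB : ∀ n, ∀ x ∈ WordsN Ω n, B * n ≤ F x) :
    ∃ Fb, IsAsympMean Ω F Fb := by
  obtain ⟨ω₀, hω₀⟩ := hne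
  set u : ℕ → ℝ := fun n => sSup (F '' WordsN Ω n)
  have hle (n : ℕ) (x : List 𝒜) (hx : x ∈ WordsN Ω n) : F x ≤ u n :=
    le_csSup ((hfin n).image F).bddAbove ⟨x, hx, rfl⟩
  have hnil : 0 ≤ F [] := by simpa using hB 0 [] (word_mem_wordsN hω₀ 0 0)
  have hu : Subadditive u := by
    refine fun m n => csSup_le (Set.Nonempty.image F ⟨_, word_mem_wordsN hω₀ 0 _⟩) ?_
    rintro _ ⟨_, ⟨ω, hω, k, rfl⟩, rfl⟩
    exact (hF.word_add_le hnil (word_mem_wordsN hω k _)).trans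
      (add_le_add (hle m _ (word_mem_wordsN hω k m)) (hle n _ (word_mem_wordsN hω _ n)))
  have hbelow : BddBelow (Set.range fun n => u n / n) := by
    refine ⟨min B 0, ?_⟩
    rintro _ ⟨n, rfl⟩
    rcases n.eq_zero_or_pos with rfl | hn
    · simp
    · refine (min_le_left _ _).trans ((le_div_iff₀ (Nat.cast_pos.2 hn)).2 ?_)
      have hword := word_mem_wordsN hω₀ 0 n
      exact (hB n _ hword).trans (hle n _ hword)
  refine ⟨hu.lim, (hu.tendsto_lim hbelow).congr fun n => ?_⟩
  have himage : (fun x => F x / (n : ℝ)) '' WordsN Ω n = (n : ℝ)⁻¹ • (F '' WordsN Ω n) := by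
    rw [← Set.image_smul, Set.image_image]
    simp only [smul_eq_mul, div_eq_inv_mul]
  rw [himage, Real.sSup_smul_of_nonneg (by positivity), smul_eq_mul, div_eq_inv_mul]

lemma IsAsympMean.exists_forall_le {Fb : ℝ} (hFb : IsAsympMean Ω F Fb)
    (hfin : ∀ n, (WordsN Ω n).Finite) {ε : ℝ} (hε : 0 < ε) :
    ∃ K, ∀ n, ∀ x ∈ WordsN Ω n, F x ≤ (Fb + ε) * n + K := by
  obtain ⟨n₀, hn₀⟩ := eventually_atTop.1 (hFb.eventually_lt_const (lt_add_of_pos_right Fb hε))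
  obtain ⟨K, hK⟩ := (((Set.finite_Iic n₀).biUnion fun n _ => hfin n).image
    fun x => F x - (Fb + ε) * x.length).bddAbove
  refine ⟨max K 0, fun n x hx => ?_⟩
  rcases le_or_gt n n₀ with hn | hn
  · have h := hK ⟨x, Set.mem_biUnion (Set.mem_Iic.2 hn) hx, rfl⟩
    simp only [length_of_mem_wordsN hx] at h
    linarith [le_max_left K 0]
  · have h := (le_csSup ((hfin n).image _).bddAbove ⟨x, hx, rfl⟩).trans (hn₀ n hn.le).le
    rw [div_le_iff₀ (by exact_mod_cast hn.pos)] at h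
    linarith [le_max_right K 0]

/-- `S` consists of starting points of pairwise disjoint occurrences of `v` in `ω(1)⋯ω(n)`; the
number `disjCount v ω n` is the largest cardinality of such an `S`. -/
structure IsDisjointOccurrences (v : List 𝒜) (ω : ℤ → 𝒜) (n : ℕ) (S : Finset ℤ) : Prop where
  occurs : ∀ k ∈ S, 1 ≤ k ∧ k + v.length ≤ (n : ℤ) + 1 ∧ occursAt v ω k
  separated : ∀ k ∈ S, ∀ l ∈ S, k ≠ l → (v.length : ℤ) ≤ |k - l|

lemma exists_isDisjointOccurrences_card_eq_disjCount (v : List 𝒜) (ω : ℤ → 𝒜) (n : ℕ) :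
    ∃ S, IsDisjointOccurrences v ω n S ∧ S.card = disjCount v ω n := by
  obtain ⟨S, hcard, hocc, hsep⟩ := Nat.sSup_mem (s := {m : ℕ | ∃ S : Finset ℤ, S.card = m ∧
    (∀ k ∈ S, 1 ≤ k ∧ k + v.length ≤ (n : ℤ) + 1 ∧ occursAt v ω k) ∧
    (∀ k ∈ S, ∀ l ∈ S, k ≠ l → (v.length : ℤ) ≤ |k - l|)}) ⟨0, ∅, by simp⟩ (by
      refine ⟨n + 1, ?_⟩
      rintro _ ⟨S, rfl, hocc, -⟩
      have hS : S ⊆ Finset.Icc 1 ((n : ℤ) + 1) := fun k hk => by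
        have := hocc k hk
        exact Finset.mem_Icc.2 (by omega)
      simpa using Finset.card_le_card hS)
  exact ⟨S, ⟨hocc, hsep⟩, hcard⟩

/- The `#S` occurrences cut `p(1)⋯p(n)` into themselves and at most `#S + 1` further pieces. -/
lemma SubadditiveOn.prefix_le_of_isDisjointOccurrences (hF : SubadditiveOn Ω F) (hnil : 0 ≤ F [])
    (hp : ∀ (a : ℤ) (n : ℕ), 1 ≤ a → word p a n ∈ WordsN Ω n) {B K : ℝ}
    (hK : ∀ n, ∀ x ∈ WordsN Ω n, F x ≤ B * n + K) {v : List 𝒜} {n : ℕ} {S : Finset ℤ}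
    (hS : IsDisjointOccurrences v p n S) :
    F (word p 1 n) ≤ S.card * F v + (n - S.card * v.length) * B + (S.card + 1) * K := by
  induction S using Finset.induction_on_max generalizing n with
  | empty =>
    have := hK n _ (hp 1 n le_rfl)
    simp only [Finset.card_empty, Nat.cast_zero]
    linarith
  | insert k S hmax ih =>
    obtain ⟨hk, hkn, hv⟩ := hS.occurs k (Finset.mem_insert_self k S)
    obtain ⟨q, rfl⟩ := Int.le.dest hk
    obtain ⟨t, rfl⟩ : ∃ t, n = q + (v.length + t) := ⟨n - q - v.length, by omega⟩
    have hS' : IsDisjointOccurrences v p q S := by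
      refine ⟨fun l hl => ?_, fun a ha b hb =>
        hS.separated a (Finset.mem_insert_of_mem ha) b (Finset.mem_insert_of_mem hb)⟩
      obtain ⟨hl1, -, hocc⟩ := hS.occurs l (Finset.mem_insert_of_mem hl)
      have hlk := hmax l hl
      have hsep := hS.separated _ (Finset.mem_insert_self _ S) l (Finset.mem_insert_of_mem hl)
        hlk.ne'
      rw [abs_of_pos (sub_pos.2 hlk)] at hsep
      exact ⟨hl1, by omega, hocc⟩
    have hfirst := hF.word_add_le hnil (hp 1 (q + (v.length + t)) le_rfl)
    have hsecond := hF.word_add_le hnil (hp (1 + q) (v.length + t) hk)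
    rw [← show v = word p (1 + q) v.length from hv] at hsecond
    have hlast := hK t _ (hp (1 + q + v.length) t (by omega))
    rw [Finset.card_insert_of_notMem fun h => (hmax _ h).false]
    push_cast
    linarith [ih hS']

lemma CondPQ.exists_forall_eventually_le (hPQ : CondPQ p) :
    ∃ c : ℝ, 0 < c ∧ ∀ m : ℕ, 1 ≤ m →
      ∀ᶠ n : ℕ in atTop, c * n ≤ disjCount (word p 1 m) p n * m := by
  obtain ⟨c, hc, hliminf⟩ := hPQ
  refine ⟨c / 2, half_pos hc, fun m hm => ?_⟩
  filter_upwards [eventually_lt_of_lt_liminf ((half_lt_self hc).trans_le (hliminf m hm))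
    (isBoundedUnder_of ⟨0, fun n => by positivity⟩), eventually_gt_atTop 0] with n hn hn0
  rw [div_mul_eq_mul_div, lt_div_iff₀ (Nat.cast_pos.2 hn0)] at hn
  linarith

lemma eventually_const_le_mul_natCast (K : ℝ) {ε : ℝ} (hε : 0 < ε) :
    ∀ᶠ n : ℕ in atTop, K ≤ ε * n :=
  (tendsto_natCast_atTop_atTop.const_mul_atTop hε).eventually_ge_atTop K

lemma SubadditiveOn.eventually_prefix_mean_le (hF : SubadditiveOn Ω F) (hnil : 0 ≤ F [])
    (hp : ∀ (a : ℤ) (n : ℕ), 1 ≤ a → word p a n ∈ WordsN Ω n) {c δ ε Fb K : ℝ} (hδ : 0 ≤ δ)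
    (hε : 0 < ε) (hK : ∀ n, ∀ x ∈ WordsN Ω n, F x ≤ (Fb + ε) * n + K) {m : ℕ}
    (hfreq : ∀ᶠ n : ℕ in atTop, c * n ≤ disjCount (word p 1 m) p n * m) (hKm : K ≤ ε * m)
    (hm : F (word p 1 m) ≤ (Fb - δ) * m) :
    ∀ᶠ n : ℕ in atTop, F (word p 1 n) / n ≤ Fb + 2 * ε - c * δ := by
  filter_upwards [hfreq, eventually_const_le_mul_natCast K hε, eventually_gt_atTop 0]
    with n hn hKn hn0
  obtain ⟨S, hS, hcard⟩ := exists_isDisjointOccurrences_card_eq_disjCount (word p 1 m) p n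
  have hcut := hF.prefix_le_of_isDisjointOccurrences hnil hp hK hS
  rw [hcard, length_word] at hcut
  set s : ℝ := ((disjCount (word p 1 m) p n : ℕ) : ℝ)
  have : 0 ≤ s := Nat.cast_nonneg _
  rw [div_le_iff₀ (Nat.cast_pos.2 hn0)]
  calc F (word p 1 n)
      ≤ s * F (word p 1 m) + (n - s * m) * (Fb + ε) + (s + 1) * K := hcut
    _ ≤ s * ((Fb - δ) * m) + (n - s * m) * (Fb + ε) + (s * (ε * m) + ε * n) := by
        rw [add_one_mul]
        gcongr
    _ = (Fb + 2 * ε) * n - δ * (s * m) := by ring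
    _ ≤ (Fb + 2 * ε) * n - δ * (c * n) := by gcongr
    _ = (Fb + 2 * ε - c * δ) * n := by ring

theorem SubadditiveOn.tendsto_prefix_mean (hF : SubadditiveOn Ω F) (hnil : 0 ≤ F [])
    (hfin : ∀ n, (WordsN Ω n).Finite) (hp : ∀ (a : ℤ) (n : ℕ), 1 ≤ a → word p a n ∈ WordsN Ω n)
    (hPQ : CondPQ p) {Fb : ℝ} (hFb : IsAsympMean Ω F Fb) {m : ℕ → ℕ} (hm : Tendsto m atTop atTop)
    (hlim : Tendsto (fun n => F (word p 1 (m n)) / m n) atTop (𝓝 Fb)) :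
    Tendsto (fun n : ℕ => F (word p 1 n) / n) atTop (𝓝 Fb) := by
  refine tendsto_order.2 ⟨fun b hb => ?_, fun b hb => ?_⟩
  · by_contra hfrequently
    obtain ⟨c, hc, hfreq⟩ := hPQ.exists_forall_eventually_le
    have hδ : 0 < Fb - b := sub_pos.2 hb
    have hε : 0 < c * (Fb - b) / 4 := by positivity
    obtain ⟨K, hK⟩ := hFb.exists_forall_le hfin hε
    obtain ⟨l, hbad, hl0, hKl⟩ := ((not_eventually.1 hfrequently).and_eventually
      ((eventually_gt_atTop 0).and (eventually_const_le_mul_natCast K hε))).exists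
    rw [not_lt, div_le_iff₀ (Nat.cast_pos.2 hl0)] at hbad
    have hev := hF.eventually_prefix_mean_le hnil hp hδ.le hε hK (hfreq l hl0) hKl
      (by rwa [sub_sub_cancel])
    linarith [le_of_tendsto hlim (hm.eventually hev)]
  · obtain ⟨b', hb', hb'b⟩ := exists_between hb
    obtain ⟨K, hK⟩ := hFb.exists_forall_le hfin (sub_pos.2 hb')
    filter_upwards [eventually_const_le_mul_natCast K (half_pos (sub_pos.2 hb'b)),
      eventually_gt_atTop 0] with n hKn hn0
    have hn : (0 : ℝ) < n := Nat.cast_pos.2 hn0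
    rw [div_lt_iff₀ hn]
    nlinarith [hK n _ (hp 1 n le_rfl)]

lemma tendsto_div_of_abs_sub_le {u g : ℕ → ℝ} {a D : ℝ} (L : ℕ)
    (hclose : ∀ n, |u (n + L) - g n| ≤ D) (hg : Tendsto (fun n => g n / n) atTop (𝓝 a)) :
    Tendsto (fun n => u n / n) atTop (𝓝 a) := by
  rw [← tendsto_add_atTop_iff_nat L]
  have hmain : Tendsto (fun n : ℕ => g n / n * (n / (n + L))) atTop (𝓝 a) := by
    simpa using hg.mul (tendsto_natCast_div_add_atTop (L : ℝ))
  have herror : Tendsto (fun n => (u (n + L) - g n) / (n + L : ℕ)) atTop (𝓝 0) := by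
    refine squeeze_zero_norm (fun n => ?_)
      ((tendsto_add_atTop_iff_nat L).2 (tendsto_const_div_atTop_nhds_zero_nat D))
    rw [Real.norm_eq_abs, abs_div, Nat.abs_cast]
    gcongr
    exact hclose n
  rw [← add_zero a]
  refine (hmain.add herror).congr' ?_
  filter_upwards [eventually_gt_atTop 0] with n hn
  have hn0 : (n : ℝ) ≠ 0 := by positivity
  have hnL : (n : ℝ) + L ≠ 0 := by positivity
  push_cast
  field_simp
  ring

end Subadditive

section Reversal

variable {𝒜 : Type*} {Ω : Set (ℤ → 𝒜)}

/-- The language of `Ω` is closed under reversal of words. -/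
def ReversalClosed (Ω : Set (ℤ → 𝒜)) : Prop :=
  ∀ n, ∀ x ∈ WordsN Ω n, x.reverse ∈ WordsN Ω n

lemma SubadditiveOn.comp_reverse {F : List 𝒜 → ℝ} (hF : SubadditiveOn Ω F)
    (hrev : ReversalClosed Ω) : SubadditiveOn Ω fun x => F x.reverse := by
  have hWords : ∀ x ∈ Words Ω, x.reverse ∈ Words Ω := fun x hx => by
    rw [Words, Set.mem_ofPred_eq, List.length_reverse]
    exact ⟨hx.1, hrev _ _ hx.2⟩
  intro x y hx hy hxy
  have h := hF _ _ (hWords y hy) (hWords x hx) (List.reverse_append ▸ hWords _ hxy)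
  rwa [← List.reverse_append, add_comm] at h

lemma IsAsympMean.comp_reverse {F : List 𝒜 → ℝ} {Fb : ℝ} (hFb : IsAsympMean Ω F Fb)
    (hrev : ReversalClosed Ω) : IsAsympMean Ω (fun x => F x.reverse) Fb := by
  have himage (n : ℕ) : List.reverse '' WordsN Ω n = WordsN Ω n :=
    Set.Subset.antisymm (Set.image_subset_iff.2 (hrev n))
      fun x hx => ⟨x.reverse, hrev n x hx, x.reverse_reverse⟩
  refine hFb.congr fun n => ?_
  conv_lhs => rw [← himage n, Set.image_image]

/-- Condition (γ') for a single word: cubes `w w w` of unbounded length sit in `ω` with one of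
their two inner boundaries at the origin. -/
def HasCentralCubes (ω : ℤ → 𝒜) : Prop :=
  ∃ w : ℕ → List 𝒜, Tendsto (fun k => (w k).length) atTop atTop ∧
    ∀ k, occursAt (w k ++ w k ++ w k) ω (-((w k).length : ℤ)) ∨
      occursAt (w k ++ w k ++ w k) ω (-(2 * ((w k).length : ℤ)))

lemma HasCentralCubes.exists_period {ω : ℤ → 𝒜} (hω : HasCentralCubes ω) (B : ℕ) :
    ∃ L : ℕ, B ≤ L ∧ ((∀ i : ℤ, -L ≤ i → i < L → ω i = ω (i + L)) ∨
      (∀ i : ℤ, -(2 * L) ≤ i → i < 0 → ω i = ω (i + L))) := by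
  obtain ⟨w, hw, hcube⟩ := hω
  obtain ⟨k, hk⟩ := (hw.eventually_ge_atTop B).exists
  exact ⟨(w k).length, hk, (hcube k).imp
    (fun h i hi hi' => apply_eq_apply_add_of_occursAt_cube h hi (by omega))
    (fun h i hi hi' => apply_eq_apply_add_of_occursAt_cube h hi (by omega))⟩

lemma leadWordGen_of_nonneg (p : ℤ → 𝒜) (v : List 𝒜) {n : ℤ} (hn : 0 ≤ n) :
    leadWordGen p v n = p (n + 1) := if_pos hn

lemma leadWordGen_of_lt (p : ℤ → 𝒜) (v : List 𝒜) {n : ℤ} (hn : n < -(v.length : ℤ)) :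
    leadWordGen p v n = p (-(n + v.length)) := by
  rw [leadWordGen, if_neg (by omega), if_neg (by omega)]

lemma leadWordGen_reflect (p : ℤ → 𝒜) (v : List 𝒜) {n : ℤ} (hn : 0 ≤ n ∨ n < -(v.length : ℤ)) :
    leadWordGen p v (-v.length - 1 - n) = leadWordGen p v n := by
  rcases hn with hn | hn
  · rw [leadWordGen_of_lt _ _ (by omega), leadWordGen_of_nonneg _ _ hn]
    exact congrArg p (by ring)
  · rw [leadWordGen_of_nonneg _ _ (by omega), leadWordGen_of_lt _ _ hn]
    exact congrArg p (by ring)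

lemma word_leadWordGen (p : ℤ → 𝒜) (v : List 𝒜) {a : ℤ} (ha : 0 ≤ a) (n : ℕ) :
    word (leadWordGen p v) a n = word p (a + 1) n :=
  word_eq_word_iff.2 fun i _ => by
    rw [leadWordGen_of_nonneg _ _ (by omega), add_right_comm]

lemma reverse_word_leadWordGen (p : ℤ → 𝒜) (v : List 𝒜) {a : ℤ} {n : ℕ}
    (ha : 0 ≤ a ∨ a + n ≤ -(v.length : ℤ)) :
    (word (leadWordGen p v) a n).reverse = word (leadWordGen p v) (-v.length - a - n) n := by
  rw [reverse_word, word_eq_word_iff]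
  intro i hi
  rw [← leadWordGen_reflect p v (by omega)]
  exact congrArg _ (by ring)

lemma HasCentralCubes.exists_word_eq {ω : ℤ → 𝒜} (hω : HasCentralCubes ω) (a b : ℤ) (n : ℕ) :
    ∃ k : ℤ, (0 ≤ k ∨ k + n ≤ b) ∧ word ω k n = word ω a n := by
  obtain ⟨L, hL, hright | hleft⟩ := hω.exists_period (a.natAbs + n + b.natAbs)
  · refine ⟨a + L, Or.inl (by omega), word_eq_word_iff.2 fun i hi => ?_⟩
    rw [hright (a + i) (by omega) (by omega), add_right_comm]
  · refine ⟨a - L, Or.inr (by omega), word_eq_word_iff.2 fun i hi => ?_⟩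
    rw [hleft (a - L + i) (by omega) (by omega)]
    exact congrArg ω (by ring)

theorem CondAlpha.reversalClosed {p : ℤ → 𝒜} {r : ℕ} {vw : Fin r → List 𝒜}
    (hα : CondAlpha Ω fun j => leadWordGen p (vw j))
    (hγ : ∀ j, HasCentralCubes (leadWordGen p (vw j))) : ReversalClosed Ω := by
  intro n x hx
  obtain ⟨_, hK⟩ := hα.exists_word_eq n
  obtain ⟨j, k, -, rfl⟩ := hK x hx
  obtain ⟨a, ha, haword⟩ := (hγ j).exists_word_eq (1 - k) (-(vw j).length) n
  rw [← haword, reverse_word_leadWordGen p (vw j) ha]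
  exact word_mem_wordsN (hα.1 j) _ n

end Reversal

section Cocycle

variable {𝒜 : Type*} {Ω : Set (ℤ → 𝒜)} {A : (ℤ → 𝒜) → SL2}

lemma shift_shift (a b : ℤ) (ω : ℤ → 𝒜) : shift a (shift b ω) = shift (a + b) ω := by
  funext n
  simp only [shift, add_assoc]

lemma shift_zero (ω : ℤ → 𝒜) : shift 0 ω = ω := by
  funext n
  simp only [shift, add_zero]

/-- `Ω` is invariant under the shift and its inverse, hence under all its powers. -/
def ShiftInvariant (Ω : Set (ℤ → 𝒜)) : Prop := ∀ (k : ℤ), ∀ ω ∈ Ω, shift k ω ∈ Ω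

lemma IsSubshift.shiftInvariant [TopologicalSpace 𝒜] (hΩ : IsSubshift Ω) : ShiftInvariant Ω := by
  intro k ω hω
  induction k with
  | zero => rwa [shift_zero]
  | succ i ih =>
    have h := hΩ.shift_mem _ ih
    rwa [shift_shift, add_comm] at h
  | pred i ih =>
    have h := hΩ.shift_neg_mem _ ih
    rwa [shift_shift, neg_add_eq_sub] at h

lemma cocycleP_add (A : (ℤ → 𝒜) → SL2) (m n : ℕ) (ω : ℤ → 𝒜) :
    cocycleP A (m + n) ω = cocycleP A n (shift m ω) * cocycleP A m ω := by
  induction n with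
  | zero => exact (one_mul _).symm
  | succ n ih =>
    rw [← add_assoc, cocycleP, cocycleP, ih, shift_shift, mul_assoc, Nat.cast_add, add_comm (m : ℤ)]

lemma cocycle_natCast (A : (ℤ → 𝒜) → SL2) (n : ℕ) (ω : ℤ → 𝒜) :
    cocycle A n ω = cocycleP A n ω := by simp [cocycle]

lemma cocycle_neg_natCast (A : (ℤ → 𝒜) → SL2) (n : ℕ) (ω : ℤ → 𝒜) :
    cocycle A (-n) ω = (cocycleP A n (shift (-n) ω))⁻¹ := by
  rcases n.eq_zero_or_pos with rfl | hn
  · simp [cocycle, cocycleP]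
  · rw [cocycle, if_neg (by omega), neg_neg, Int.toNat_natCast]

variable (hΩ : ShiftInvariant Ω) {C : ℝ} (hC : ∀ ω ∈ Ω, slLogNorm (A ω) ≤ C) {N : ℕ}
  (hN : ∀ ω ∈ Ω, ∀ ρ ∈ Ω, (∀ i : ℤ, |i| ≤ (N : ℤ) → ω i = ρ i) → A ω = A ρ)
  {ω ρ : ℤ → 𝒜} (hω : ω ∈ Ω) (hρ : ρ ∈ Ω)

include hΩ hC hω in
lemma slLogNorm_cocycleP_le (n : ℕ) : slLogNorm (cocycleP A n ω) ≤ n * C := by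
  induction n with
  | zero => simp [cocycleP, slLogNorm_one]
  | succ n ih =>
    calc slLogNorm (A (shift n ω) * cocycleP A n ω)
        ≤ slLogNorm (A (shift n ω)) + slLogNorm (cocycleP A n ω) := slLogNorm_mul_le _ _
      _ ≤ C + n * C := add_le_add (hC _ (hΩ n ω hω)) ih
      _ = (n + 1 : ℕ) * C := by push_cast; ring

include hΩ hC hω in
lemma slLogNorm_cocycleP_le_of_le {m n : ℕ} (hmn : m ≤ n) :
    slLogNorm (cocycleP A m ω) ≤ n * C := by
  have hC0 : 0 ≤ C := (slLogNorm_nonneg _).trans (hC ω hω)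
  exact (slLogNorm_cocycleP_le hΩ hC hω m).trans (by gcongr)

include hΩ hN hω hρ in
lemma cocycleP_eq_of_forall_eq {n : ℕ}
    (h : ∀ m < n, ∀ i : ℤ, |i - m| ≤ N → ω i = ρ i) : cocycleP A n ω = cocycleP A n ρ := by
  induction n with
  | zero => rfl
  | succ n ih =>
    rw [cocycleP, cocycleP, ih fun m hm => h m (by omega)]
    congr 1
    refine hN _ (hΩ n ω hω) _ (hΩ n ρ hρ) fun i hi => ?_
    exact h n n.lt_succ_self _ (by rwa [add_sub_cancel_right])

include hΩ hC hN hω hρ in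
lemma slLogNorm_cocycleP_mul_inv_le {n : ℕ} (h : ∀ i : ℤ, -N ≤ i → i < n → ω i = ρ i) :
    slLogNorm (cocycleP A n ω * (cocycleP A n ρ)⁻¹) ≤ 2 * N * C := by
  obtain ⟨k, j, rfl, hj, hjk⟩ : ∃ k j, n = k + j ∧ j ≤ N ∧ (0 < k → j = N) :=
    ⟨n - N, min n N, by omega, by omega, by omega⟩
  have hcommon : cocycleP A k ω = cocycleP A k ρ :=
    cocycleP_eq_of_forall_eq hΩ hN hω hρ fun m hm i hi => by
      rw [abs_le] at hi
      exact h i (by omega) (by omega)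
  rw [cocycleP_add, cocycleP_add, hcommon, mul_inv_rev, mul_assoc, mul_inv_cancel_left]
  have hωj := slLogNorm_cocycleP_le_of_le hΩ hC (hΩ k ω hω) hj
  have hρj := slLogNorm_cocycleP_le_of_le hΩ hC (hΩ k ρ hρ) hj
  have hmul := slLogNorm_mul_le (cocycleP A j (shift k ω)) (cocycleP A j (shift k ρ))⁻¹
  rw [slLogNorm_inv] at hmul
  linarith

include hΩ hC hN hω hρ in
lemma slLogNorm_inv_mul_cocycleP_le {n : ℕ} (h : ∀ i : ℤ, 0 ≤ i → i < n + N → ω i = ρ i) :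
    slLogNorm ((cocycleP A n ω)⁻¹ * cocycleP A n ρ) ≤ 2 * N * C := by
  obtain ⟨j, k, rfl, hj, hjk⟩ : ∃ j k, n = j + k ∧ j ≤ N ∧ (0 < k → j = N) :=
    ⟨min n N, n - N, by omega, by omega, by omega⟩
  have hcommon : cocycleP A k (shift j ω) = cocycleP A k (shift j ρ) :=
    cocycleP_eq_of_forall_eq hΩ hN (hΩ j ω hω) (hΩ j ρ hρ) fun m hm i hi => by
      rw [abs_le] at hi
      exact h _ (by omega) (by omega)
  rw [cocycleP_add, cocycleP_add, hcommon, mul_inv_rev, mul_assoc, inv_mul_cancel_left]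
  have hωj := slLogNorm_cocycleP_le_of_le hΩ hC hω hj
  have hρj := slLogNorm_cocycleP_le_of_le hΩ hC hρ hj
  have hmul := slLogNorm_mul_le (cocycleP A j ω)⁻¹ (cocycleP A j ρ)
  rw [slLogNorm_inv] at hmul
  linarith

include hΩ hC hN hω hρ in
lemma slLogNorm_cocycleP_le_add {n : ℕ} (h : ∀ i : ℤ, 0 ≤ i → i < n → ω i = ρ i) :
    slLogNorm (cocycleP A n ω) ≤ slLogNorm (cocycleP A n ρ) + 4 * N * C := by
  obtain ⟨j, k, rfl, hj, hjk⟩ : ∃ j k, n = j + k ∧ j ≤ N ∧ (0 < k → j = N) :=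
    ⟨min n N, n - N, by omega, by omega, by omega⟩
  have hωj := slLogNorm_cocycleP_le_of_le hΩ hC hω hj
  have hρj := slLogNorm_cocycleP_le_of_le hΩ hC hρ hj
  rcases k.eq_zero_or_pos with rfl | hk
  · have hNC : 0 ≤ N * C := (slLogNorm_nonneg _).trans hωj
    rw [add_zero]
    linarith [slLogNorm_nonneg (cocycleP A j ρ)]
  have hmid : slLogNorm (cocycleP A k (shift j ω) * (cocycleP A k (shift j ρ))⁻¹) ≤ 2 * N * C :=
    slLogNorm_cocycleP_mul_inv_le hΩ hC hN (hΩ j ω hω) (hΩ j ρ hρ)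
      fun i hi hi' => h _ (by omega) (by omega)
  rw [cocycleP_add, cocycleP_add]
  set P := cocycleP A k (shift j ω)
  set Q := cocycleP A k (shift j ρ)
  have hPQ := slLogNorm_mul_le (P * Q⁻¹) Q
  rw [inv_mul_cancel_right] at hPQ
  linarith [slLogNorm_mul_le P (cocycleP A j ω),
    (abs_sub_le_iff.1 (abs_slLogNorm_mul_sub_left_le Q (cocycleP A j ρ))).2]

end Cocycle

section CocycleLogSup

variable {𝒜 : Type*} {Ω : Set (ℤ → 𝒜)}

/-- The largest logarithmic norm of the cocycle read along the word `x`. A locally constant `A` may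
depend on letters outside `x`, so that different `ω ∈ Ω` starting with `x` give different
norms; taking the supremum makes the function exactly subadditive. -/
noncomputable def cocycleLogSup (Ω : Set (ℤ → 𝒜)) (A : (ℤ → 𝒜) → SL2) (x : List 𝒜) : ℝ :=
  sSup ((fun ω => slLogNorm (cocycleP A x.length ω)) '' {ω ∈ Ω | word ω 0 x.length = x})

variable {A : (ℤ → 𝒜) → SL2}

lemma cocycleLogSup_nonneg (x : List 𝒜) : 0 ≤ cocycleLogSup Ω A x :=
  Real.sSup_nonneg <| by
    rintro _ ⟨ω, -, rfl⟩
    exact slLogNorm_nonneg _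

variable (hΩ : ShiftInvariant Ω) {C : ℝ} (hC : ∀ ω ∈ Ω, slLogNorm (A ω) ≤ C)

include hΩ hC in
lemma slLogNorm_cocycleP_le_cocycleLogSup {ω : ℤ → 𝒜} (hω : ω ∈ Ω) {x : List 𝒜}
    (hx : word ω 0 x.length = x) :
    slLogNorm (cocycleP A x.length ω) ≤ cocycleLogSup Ω A x := by
  refine le_csSup ⟨x.length * C, ?_⟩ ⟨ω, ⟨hω, hx⟩, rfl⟩
  rintro _ ⟨ρ, ⟨hρ, -⟩, rfl⟩
  exact slLogNorm_cocycleP_le hΩ hC hρ _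

include hΩ in
lemma cocycleLogSup_le {x : List 𝒜} (hx : x ∈ WordsN Ω x.length) {D : ℝ}
    (hD : ∀ ρ ∈ Ω, word ρ 0 x.length = x → slLogNorm (cocycleP A x.length ρ) ≤ D) :
    cocycleLogSup Ω A x ≤ D := by
  obtain ⟨ω, hω, k, hxω⟩ := hx
  refine csSup_le ⟨_, shift k ω, ⟨hΩ k ω hω, ?_⟩, rfl⟩ ?_
  · rw [word_shift, zero_add, ← hxω]
  · rintro _ ⟨ρ, ⟨hρ, hxρ⟩, rfl⟩
    exact hD ρ hρ hxρ

include hΩ hC in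
lemma subadditiveOn_cocycleLogSup : SubadditiveOn Ω (cocycleLogSup Ω A) := by
  intro x y _ _ hxy
  refine cocycleLogSup_le hΩ hxy.2 fun ρ hρ hword => ?_
  obtain ⟨hx, hy⟩ := word_eq_and_word_eq_of_append hword.symm
  rw [List.length_append, cocycleP_add, add_comm (cocycleLogSup Ω A x)]
  refine (slLogNorm_mul_le _ _).trans (add_le_add ?_ ?_)
  · refine slLogNorm_cocycleP_le_cocycleLogSup hΩ hC (hΩ _ ρ hρ) ?_
    rw [word_shift, ← hy]
  · exact slLogNorm_cocycleP_le_cocycleLogSup hΩ hC hρ hx.symm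

include hΩ hC in
lemma abs_slLogNorm_cocycleP_sub_cocycleLogSup_le {N : ℕ}
    (hN : ∀ ω ∈ Ω, ∀ ρ ∈ Ω, (∀ i : ℤ, |i| ≤ (N : ℤ) → ω i = ρ i) → A ω = A ρ)
    {ω : ℤ → 𝒜} (hω : ω ∈ Ω) (k : ℤ) (n : ℕ) :
    |slLogNorm (cocycleP A n (shift k ω)) - cocycleLogSup Ω A (word ω k n)| ≤ 4 * N * C := by
  have hkω : shift k ω ∈ Ω := hΩ k ω hω
  have hC0 : 0 ≤ C := (slLogNorm_nonneg _).trans (hC ω hω)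
  have hlower : slLogNorm (cocycleP A n (shift k ω)) ≤ cocycleLogSup Ω A (word ω k n) := by
    simpa using slLogNorm_cocycleP_le_cocycleLogSup hΩ hC hkω (x := word ω k n)
      (by rw [word_shift, zero_add, length_word])
  have hupper : cocycleLogSup Ω A (word ω k n) ≤
      slLogNorm (cocycleP A n (shift k ω)) + 4 * N * C := by
    refine cocycleLogSup_le hΩ (by simpa using word_mem_wordsN hω k n) fun ρ hρ hword => ?_
    rw [length_word] at hword ⊢
    refine slLogNorm_cocycleP_le_add hΩ hC hN hρ hkω fun i hi hin => ?_
    lift i to ℕ using hi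
    have h := word_eq_word_iff.1 hword i (by omega)
    rwa [zero_add, add_comm k] at h
  rw [abs_sub_le_iff]
  constructor <;> linarith [show 0 ≤ 4 * N * C by positivity]

end CocycleLogSup

section LeadingSequenceCondition

variable {𝒜 : Type*} {Ω : Set (ℤ → 𝒜)}

/-- The second half of condition (β'): every subadditive function on the words of `Ω` attains its
asymptotic mean along prefixes of `p` of unbounded length. -/
def PrefixesAttainMeans (Ω : Set (ℤ → 𝒜)) (p : ℤ → 𝒜) : Prop :=
  ∀ F : List 𝒜 → ℝ, SubadditiveOn Ω F → ∀ Fb : ℝ, IsAsympMean Ω F Fb →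
    ∃ m : ℕ → ℕ, Tendsto m atTop atTop ∧
      Tendsto (fun n : ℕ => F (word p 1 (m n)) / (m n)) atTop (𝓝 Fb)

section Limits

variable {A : (ℤ → 𝒜) → SL2} (hΩ : ShiftInvariant Ω) {C : ℝ} (hC : ∀ ω ∈ Ω, slLogNorm (A ω) ≤ C)
  {N : ℕ} (hN : ∀ ω ∈ Ω, ∀ ρ ∈ Ω, (∀ i : ℤ, |i| ≤ (N : ℤ) → ω i = ρ i) → A ω = A ρ)
  {p : ℤ → 𝒜} {v : List 𝒜} (hlead : leadWordGen p v ∈ Ω) {Λ : ℝ}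

include hΩ hC hN hlead

lemma tendsto_slLogNorm_cocycle_leadWordGen
    (hlim : Tendsto (fun n : ℕ => cocycleLogSup Ω A (word p 1 n) / n) atTop (𝓝 Λ)) :
    Tendsto (fun n : ℕ => slLogNorm (cocycle A n (leadWordGen p v)) / n) atTop (𝓝 Λ) := by
  refine tendsto_div_of_abs_sub_le 0 (D := 4 * N * C) (fun n => ?_) hlim
  have h := abs_slLogNorm_cocycleP_sub_cocycleLogSup_le hΩ hC hN hlead 0 n
  rwa [shift_zero, word_leadWordGen p v le_rfl, zero_add, ← cocycle_natCast] at h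

lemma tendsto_slLogNorm_cocycle_neg_leadWordGen
    (hlim : Tendsto (fun n : ℕ => cocycleLogSup Ω A (word p 1 n).reverse / n) atTop (𝓝 Λ)) :
    Tendsto (fun n : ℕ => slLogNorm (cocycle A (-n) (leadWordGen p v)) / n) atTop (𝓝 Λ) := by
  set ω := leadWordGen p v
  set L := v.length
  refine tendsto_div_of_abs_sub_le L (D := L * C + 4 * N * C) (fun n => ?_) hlim
  set a : ℤ := -(n + L : ℕ)
  have hreverse : (word p 1 n).reverse = word ω a n := by
    rw [← zero_add (1 : ℤ), ← word_leadWordGen p v le_rfl,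
      reverse_word_leadWordGen p v (Or.inl le_rfl)]
    exact congrArg (word ω · n) (by omega)
  rw [hreverse, cocycle_neg_natCast, slLogNorm_inv, cocycleP_add]
  set Q := cocycleP A n (shift a ω)
  set P := cocycleP A L (shift n (shift a ω))
  calc |slLogNorm (P * Q) - cocycleLogSup Ω A (word ω a n)|
      ≤ |slLogNorm (P * Q) - slLogNorm Q| + |slLogNorm Q - cocycleLogSup Ω A (word ω a n)| :=
        abs_sub_le _ _ _
    _ ≤ L * C + 4 * N * C := add_le_add
        ((abs_slLogNorm_mul_sub_right_le P Q).trans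
          (slLogNorm_cocycleP_le hΩ hC (hΩ _ _ (hΩ a ω hlead)) L))
        (abs_slLogNorm_cocycleP_sub_cocycleLogSup_le hΩ hC hN hlead a n)

end Limits

lemma LocConstOn.exists_slLogNorm_le {A : (ℤ → 𝒜) → SL2} (hA : LocConstOn Ω A)
    (hfin : ∀ n, (WordsN Ω n).Finite) : ∃ C, ∀ ω ∈ Ω, slLogNorm (A ω) ≤ C := by
  obtain ⟨C, hC⟩ := ((hA.finite_image hfin).image slLogNorm).bddAbove
  exact ⟨C, fun ω hω => hC ⟨_, ⟨ω, hω, rfl⟩, rfl⟩⟩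

theorem condBeta_leadWordGen (hΩ : ShiftInvariant Ω) {p : ℤ → 𝒜} {r : ℕ} {vw : Fin r → List 𝒜}
    (hα : CondAlpha Ω fun j => leadWordGen p (vw j)) (hPQ : CondPQ p)
    (hβ : PrefixesAttainMeans Ω p) (hrev : ReversalClosed Ω) :
    CondBeta Ω fun j => leadWordGen p (vw j) := by
  intro A hA
  rcases isEmpty_or_nonempty (Fin r) with _ | ⟨⟨j₀⟩⟩
  · exact ⟨0, isEmptyElim⟩
  have hfin := hα.finite_wordsN
  obtain ⟨C, hC⟩ := hA.exists_slLogNorm_le hfin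
  obtain ⟨N, hN⟩ := hA
  have hp (a : ℤ) (n : ℕ) (ha : 1 ≤ a) : word p a n ∈ WordsN Ω n := by
    have h := word_mem_wordsN (hα.1 j₀) (a - 1) n
    rwa [word_leadWordGen p _ (by omega), sub_add_cancel] at h
  have hF : SubadditiveOn Ω (cocycleLogSup Ω A) := subadditiveOn_cocycleLogSup hΩ hC
  obtain ⟨Λ, hΛ⟩ := hF.exists_isAsympMean ⟨_, hα.1 j₀⟩ hfin (B := 0)
    (by simp [cocycleLogSup_nonneg])
  have hmean {F : List 𝒜 → ℝ} (hF : SubadditiveOn Ω F) (hnil : 0 ≤ F [])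
      (hΛ : IsAsympMean Ω F Λ) : Tendsto (fun n : ℕ => F (word p 1 n) / n) atTop (𝓝 Λ) := by
    obtain ⟨m, hm, hlim⟩ := hβ F hF Λ hΛ
    exact hF.tendsto_prefix_mean hnil hfin hp hPQ hΛ hm hlim
  exact ⟨Λ, fun j => ⟨tendsto_slLogNorm_cocycle_leadWordGen hΩ hC hN (hα.1 j)
      (hmean hF (cocycleLogSup_nonneg _) hΛ),
    tendsto_slLogNorm_cocycle_neg_leadWordGen hΩ hC hN (hα.1 j)
      (hmean (hF.comp_reverse hrev) (cocycleLogSup_nonneg _) (hΛ.comp_reverse hrev))⟩⟩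

section ThreeBlocks

variable {A : (ℤ → 𝒜) → SL2} (hΩ : ShiftInvariant Ω) {C : ℝ} (hC : ∀ ω ∈ Ω, slLogNorm (A ω) ≤ C)
  {N : ℕ} (hN : ∀ ω ∈ Ω, ∀ ρ ∈ Ω, (∀ i : ℤ, |i| ≤ (N : ℤ) → ω i = ρ i) → A ω = A ρ)
  {ω : ℤ → 𝒜} (hω : ω ∈ Ω) {L : ℕ} (hNL : N ≤ L)

include hΩ hC hN hω hNL

lemma norm_le_of_period_around_right
    (hper : ∀ i : ℤ, -L ≤ i → i < L → ω i = ω (i + L)) (v : EuclideanSpace ℝ (Fin 2)) :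
    ‖v‖ ≤ Real.exp (2 * N * C) * (‖slAct (cocycle A L ω) v‖ +
      ‖slAct (cocycle A (2 * L : ℕ) ω) v‖ + ‖slAct (cocycle A (-L) ω) v‖) := by
  rw [cocycle_natCast, cocycle_natCast, cocycle_neg_natCast, two_mul L, cocycleP_add]
  refine norm_le_exp_mul_of_slLogNorm_le
    (slLogNorm_cocycleP_mul_inv_le hΩ hC hN (hΩ L ω hω) hω fun i hi hiL => ?_)
    (slLogNorm_inv_mul_cocycleP_le hΩ hC hN hω (hΩ (-L) ω hω) fun i hi hiL => ?_) v
  · exact (hper i (by omega) hiL).symm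
  · have h := hper (i - L) (by omega) (by omega)
    rw [sub_add_cancel] at h
    exact h.symm

lemma norm_le_of_period_around_left
    (hper : ∀ i : ℤ, -(2 * L) ≤ i → i < 0 → ω i = ω (i + L)) (v : EuclideanSpace ℝ (Fin 2)) :
    ‖v‖ ≤ Real.exp (2 * N * C) * (‖slAct (cocycle A (-L) ω) v‖ +
      ‖slAct (cocycle A (-(2 * L : ℕ)) ω) v‖ + ‖slAct (cocycle A L ω) v‖) := by
  rw [cocycle_natCast, cocycle_neg_natCast, cocycle_neg_natCast, two_mul L,
    cocycleP_add, shift_shift, show (L : ℤ) + -((L + L : ℕ) : ℤ) = -L by push_cast; ring,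
    mul_inv_rev, ← inv_inv (cocycleP A L ω)]
  refine norm_le_exp_mul_of_slLogNorm_le ?_ ?_ v <;> rw [inv_inv]
  · refine slLogNorm_inv_mul_cocycleP_le hΩ hC hN (hΩ _ ω hω) (hΩ _ ω hω) fun i hi hiL => ?_
    simp only [shift]
    rw [hper _ (by omega) (by omega)]
    exact congrArg ω (by push_cast; ring)
  · refine slLogNorm_cocycleP_mul_inv_le hΩ hC hN (hΩ _ ω hω) hω fun i hi hiL => ?_
    simp only [shift]
    rw [hper _ (by omega) (by omega), neg_add_cancel_right]

end ThreeBlocks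

theorem condGamma_of_hasCentralCubes (hΩ : ShiftInvariant Ω) (hfin : ∀ n, (WordsN Ω n).Finite)
    {r : ℕ} {lead : Fin r → ℤ → 𝒜} (hlead : ∀ j, lead j ∈ Ω) (hγ : ∀ j, HasCentralCubes (lead j)) :
    CondGamma Ω lead := by
  rintro A hA j v hv ⟨hforward, hbackward⟩
  obtain ⟨C, hC⟩ := hA.exists_slLogNorm_le hfin
  obtain ⟨N, hN⟩ := hA
  set ω := lead j
  have hω : ω ∈ Ω := hlead j
  set f : ℕ → ℝ := fun n => ‖slAct (cocycle A n ω) v‖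
  set g : ℕ → ℝ := fun n => ‖slAct (cocycle A (-n) ω) v‖
  have hf0 : Tendsto f atTop (𝓝 0) := tendsto_norm_slAct_zero_of_limsup_neg
    (fun n => by rw [cocycle_natCast]; exact slLogNorm_cocycleP_le hΩ hC hω n) hv hforward
  have hg0 : Tendsto g atTop (𝓝 0) := tendsto_norm_slAct_zero_of_limsup_neg
    (fun n => by
      rw [cocycle_neg_natCast, slLogNorm_inv]
      exact slLogNorm_cocycleP_le hΩ hC (hΩ _ ω hω) n) hv hbackward
  have hdouble : Tendsto (fun n : ℕ => 2 * n) atTop atTop :=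
    tendsto_id.const_mul_atTop' two_pos
  have hsmall : Tendsto (fun n => Real.exp (2 * N * C) * (f n + f (2 * n) + (g n + g (2 * n))))
      atTop (𝓝 0) := by
    simpa using ((hf0.add (hf0.comp hdouble)).add (hg0.add (hg0.comp hdouble))).const_mul
      (Real.exp (2 * N * C))
  obtain ⟨B, hB⟩ := eventually_atTop.1 (hsmall.eventually_lt_const (norm_pos_iff.2 hv))
  obtain ⟨L, hL, hper⟩ := (hγ j).exists_period (max B N)
  have hlarge : ‖v‖ ≤ Real.exp (2 * N * C) * (f L + f (2 * L) + (g L + g (2 * L))) := by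
    rcases hper with hright | hleft
    · refine (norm_le_of_period_around_right hΩ hC hN hω (le_of_max_le_right hL) hright v).trans ?_
      gcongr
      exact le_add_of_nonneg_right (norm_nonneg _)
    · refine (norm_le_of_period_around_left hΩ hC hN hω (le_of_max_le_right hL) hleft v).trans ?_
      rw [add_comm (f L + _)]
      gcongr
      exact le_add_of_nonneg_right (norm_nonneg _)
  exact (hB L (le_of_max_le_left hL)).not_ge hlarge

theorem statement11_general (hΩ : ShiftInvariant Ω) {p : ℤ → 𝒜} {r : ℕ} {vw : Fin r → List 𝒜}
    (hα : CondAlpha Ω fun j => leadWordGen p (vw j)) (hPQ : CondPQ p)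
    (hβ : PrefixesAttainMeans Ω p) (hγ : ∀ j, HasCentralCubes (leadWordGen p (vw j))) :
    CondBeta Ω (fun j => leadWordGen p (vw j)) ∧ CondGamma Ω (fun j => leadWordGen p (vw j)) ∧
      SatisfiesLSC Ω := by
  have hBeta := condBeta_leadWordGen hΩ hα hPQ hβ (hα.reversalClosed hγ)
  have hGamma := condGamma_of_hasCentralCubes hΩ hα.finite_wordsN hα.1 hγ
  exact ⟨hBeta, hGamma, r, _, hα, hBeta, hGamma⟩

end LeadingSequenceCondition

/-- **Sufficient condition for (LSC).** If the leading words `p^R v^(j) | p`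
satisfy (α'), (β'), (γ'), then the uniquely ergodic subshift satisfies (β), (γ) and (LSC). -/
theorem statement11 {𝒜 : Type*} [Fintype 𝒜] [TopologicalSpace 𝒜] [DiscreteTopology 𝒜]
    {Ω : Set (ℤ → 𝒜)} (hΩ : IsSubshift Ω) (hue : UniformWordFreq Ω)
    (p : ℤ → 𝒜) {r : ℕ} (vw : Fin r → List 𝒜)
    (lead : Fin r → (ℤ → 𝒜)) (hlead : ∀ j, lead j = leadWordGen p (vw j))
    -- (α'): the leading words belong to Ω and condition (α) holds
    (hα : CondAlpha Ω lead)
    -- (β'): `p` satisfies (PQ) and every subadditive `F` attains its asymptotic mean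
    -- along a sequence of prefixes of `p`
    (hPQ : CondPQ p)
    (hβ' : ∀ F : List 𝒜 → ℝ, SubadditiveOn Ω F → ∀ Fb : ℝ, IsAsympMean Ω F Fb →
      ∃ m : ℕ → ℕ, Filter.Tendsto m Filter.atTop Filter.atTop ∧
        Filter.Tendsto (fun n : ℕ => F (word p 1 (m n)) / (m n)) Filter.atTop (nhds Fb))
    -- (γ'): each leading word begins with cubes of unbounded length around the origin
    (hγ' : ∀ j : Fin r, ∃ w : ℕ → List 𝒜,
      Filter.Tendsto (fun k => (w k).length) Filter.atTop Filter.atTop ∧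
      ∀ k, occursAt (w k ++ w k ++ w k) (lead j) (-((w k).length : ℤ)) ∨
        occursAt (w k ++ w k ++ w k) (lead j) (-(2 * ((w k).length : ℤ)))) :
    CondBeta Ω lead ∧ CondGamma Ω lead ∧ SatisfiesLSC Ω := by
  obtain rfl : lead = fun j => leadWordGen p (vw j) := funext hlead
  exact statement11_general hΩ.shiftInvariant hα hPQ hβ' hγ'
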